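/- Let (r,T,H) be a covariant representation of (A,Θ,Ξ,κ) and h ∈ 𝓢(Ξ) a window. For a smooth vector f ∈ A^∞ define the bounded operator (r⋊T)^M_h(f) := ∫_Ξ r(Θ_{X/2}[(M_h f)(X)]) T(X) dX (a Bochner integral in B(H)). Then for every Z ∈ Ξ one has T(Z) · (r⋊T)^M_h(f) · T(Z)⁻¹ = (r⋊T)^M_{𝒯_Z h}(f), where (𝒯_Z h)(Y) := h(Y−Z). -/

import Mathlib

/-!
Conjugation by `T(Z)` is a continuous linear automorphism of `B(H)`, so it passes under the outer
integral (`conj_integral`). By covariance the integrand becomes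
`r(Θ_{X/2} Θ_Z (M_h f)(X)) · T(Z) T(X) T(Z)⁻¹`. The Weyl relation (`weyl_comm`) turns the last
factor into `exp(-iω(X,Z)) T(X)`, while the substitution `Y ↦ Y - Z` in the inner integral
(`theta_modulation`) gives `Θ_Z (M_h f)(X) = exp(iω(X,Z)) (M_{𝒯_Z h} f)(X)`. The phases cancel and
the integrands agree pointwise. Both maps moved through integrals are continuous linear
equivalences, so the identity holds without any discussion of integrability.
-/

open MeasureTheory Complex
open scoped ENNReal

noncomputable section

/-- `Ξ = ℝⁿ × ℝⁿ`. -/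
abbrev Xi (n : ℕ) : Type := (Fin n → ℝ) × (Fin n → ℝ)

/-- The symplectic form on `Ξ`: `ω((x,ξ),(y,η)) = y·ξ − x·η`. -/
def symp {n : ℕ} (X Y : Xi n) : ℝ :=
  (∑ i, Y.1 i * X.2 i) - ∑ i, X.1 i * Y.2 i

/-- `κ(X,Y) = exp(−(i/2)·ω(X,Y))`. -/
def kap {n : ℕ} (X Y : Xi n) : ℂ := Complex.exp (-(Complex.I / 2) * (symp X Y : ℂ))

/-- The normalized measure `dX = (2π)^{−n} ×` Lebesgue measure on `Ξ = ℝ^{2n}`. -/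
def nmeas (n : ℕ) : Measure (Xi n) := (ENNReal.ofReal ((2 * Real.pi) ^ n))⁻¹ • volume


/-- The operator `(r⋊T)^M_w(f) = ∫ r(Θ_{X/2}[(M_w f)(X)]) T(X) dX` for a window `w`. -/
def repOpM {n : ℕ} {A : Type*} [NormedRing A] [StarRing A] [CStarRing A]
    [NormedAlgebra ℂ A] [StarModule ℂ A] [CompleteSpace A]
    {H : Type*} [NormedAddCommGroup H] [InnerProductSpace ℂ H] [CompleteSpace H]
    (Θ : Xi n → A ≃⋆ₐ[ℂ] A) (r : A →⋆ₐ[ℂ] (H →L[ℂ] H)) (T : Xi n → (H ≃ₗᵢ[ℂ] H))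
    (w : Xi n → ℂ) (f : A) : H →L[ℂ] H :=
  ∫ X, ((r (Θ ((2:ℝ)⁻¹ • X)
      (∫ Y, Complex.exp (-Complex.I * (symp X Y : ℂ)) • (w Y • Θ Y f) ∂(nmeas n)))).comp
    ((T X).toContinuousLinearEquiv : H →L[ℂ] H)) ∂(nmeas n)

/-- A `⋆`-automorphism of a C⋆-algebra commutes with Bochner integration: it is isometric, hence a
continuous linear equivalence, so no integrability hypothesis is needed. -/
theorem starAlgEquiv_integral {n : ℕ} {A : Type*} [NormedRing A] [StarRing A] [CStarRing A]
    [NormedAlgebra ℂ A] [StarModule ℂ A] [CompleteSpace A] (φ : A ≃⋆ₐ[ℂ] A)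
    (μ : Measure (Xi n)) (F : Xi n → A) : φ (∫ Y, F Y ∂μ) = ∫ Y, φ (F Y) ∂μ := by
  let _ : CStarAlgebra A := { ‹NormedRing A›, ‹StarRing A›, ‹CStarRing A›, ‹NormedAlgebra ℂ A›,
    ‹StarModule ℂ A›, ‹CompleteSpace A› with }
  let e : A ≃ₗᵢ[ℂ] A :=
    { toLinearEquiv := LinearEquiv.ofBijective (φ : A →ₗ[ℂ] A) φ.bijective
      norm_map' := fun x => NonUnitalStarAlgHom.norm_map φ φ.injective x }
  exact (e.toContinuousLinearEquiv.integral_comp_comm F).symm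

theorem symp_sub_right {n : ℕ} (X Y Z : Xi n) : symp X (Y - Z) = symp X Y - symp X Z := by
  simp only [symp, Prod.fst_sub, Prod.snd_sub, Pi.sub_apply, sub_mul, mul_sub,
    Finset.sum_sub_distrib]
  ring

theorem symp_swap {n : ℕ} (X Y : Xi n) : symp X Y = -symp Y X := by
  simp only [symp, neg_sub]

/-- `T(Z) T(X) = exp(-iω(X,Z)) T(X) T(Z)`: the Weyl commutation relation. -/
theorem weyl_comm {n : ℕ} {H : Type*} [NormedAddCommGroup H] [InnerProductSpace ℂ H]
    (T : Xi n → (H ≃ₗᵢ[ℂ] H))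
    (hTmul : ∀ (X Y : Xi n) (v : H), T X (T Y v) = kap Y X • T (X + Y) v)
    (X Z : Xi n) (v : H) :
    T Z (T X v) = Complex.exp (-Complex.I * (symp X Z : ℂ)) • T X (T Z v) := by
  rw [hTmul, hTmul, smul_smul, add_comm Z X]
  congr 1
  rw [kap, kap, ← Complex.exp_add, symp_swap Z X]
  congr 1
  push_cast
  ring

/-- Applying `Θ_Z` to `(M_w f)(X)` translates the window by `Z`, up to the phase
`exp(iω(X,Z))`. -/
theorem theta_modulation {n : ℕ} {A : Type*} [NormedRing A] [StarRing A] [CStarRing A]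
    [NormedAlgebra ℂ A] [StarModule ℂ A] [CompleteSpace A]
    (Θ : Xi n → A ≃⋆ₐ[ℂ] A) (hΘadd : ∀ X Y f, Θ (X + Y) f = Θ X (Θ Y f))
    (w : Xi n → ℂ) (f : A) (X Z : Xi n) :
    Θ Z (∫ Y, Complex.exp (-Complex.I * (symp X Y : ℂ)) • (w Y • Θ Y f) ∂(nmeas n)) =
      Complex.exp (Complex.I * (symp X Z : ℂ)) •
        ∫ Y, Complex.exp (-Complex.I * (symp X Y : ℂ)) • (w (Y - Z) • Θ Y f) ∂(nmeas n) := by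
  rw [starAlgEquiv_integral, ← integral_smul]
  simp only [nmeas, integral_smul_measure]
  congr 1
  have hinv : (volume : Measure (Xi n)).IsAddRightInvariant := by
    rw [Measure.volume_eq_prod]
    infer_instance
  rw [← integral_sub_right_eq_self _ Z]
  refine integral_congr_ae (Filter.Eventually.of_forall fun Y => ?_)
  simp only [map_smul]
  rw [← hΘadd, add_sub_cancel, smul_smul _ _ (w (Y - Z) • Θ Y f), ← Complex.exp_add,
    symp_sub_right]
  congr 2
  push_cast
  ring

/-- Conjugation by a unitary commutes with Bochner integration in `B(H)`; being a continuous linear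
equivalence of `B(H)`, it needs no integrability hypothesis. -/
theorem conj_integral {n : ℕ} {H : Type*} [NormedAddCommGroup H] [InnerProductSpace ℂ H]
    [CompleteSpace H] (U : H ≃ₗᵢ[ℂ] H) (μ : Measure (Xi n)) (F : Xi n → (H →L[ℂ] H)) :
    (U.toContinuousLinearEquiv : H →L[ℂ] H).comp
        ((∫ X, F X ∂μ).comp (U.symm.toContinuousLinearEquiv : H →L[ℂ] H)) =
      ∫ X, (U.toContinuousLinearEquiv : H →L[ℂ] H).comp
        ((F X).comp (U.symm.toContinuousLinearEquiv : H →L[ℂ] H)) ∂μ :=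
  ((U.toContinuousLinearEquiv.arrowCongr U.toContinuousLinearEquiv).integral_comp_comm F).symm

/-- Conjugating `(r⋊T)^M_h(f)` by `T(Z)` amounts to translating the window:
`T(Z)·(r⋊T)^M_h(f)·T(Z)⁻¹ = (r⋊T)^M_{𝒯_Z h}(f)`. -/
theorem stmt10 {n : ℕ} {A : Type*} [NormedRing A] [StarRing A] [CStarRing A]
    [NormedAlgebra ℂ A] [StarModule ℂ A] [CompleteSpace A]
    {H : Type*} [NormedAddCommGroup H] [InnerProductSpace ℂ H] [CompleteSpace H]
    (Θ : Xi n → A ≃⋆ₐ[ℂ] A)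
    (hΘadd : ∀ X Y f, Θ (X + Y) f = Θ X (Θ Y f))
    (hΘ0 : ∀ f, Θ 0 f = f)
    (hΘcont : ∀ f, Continuous fun X => Θ X f)
    (r : A →⋆ₐ[ℂ] (H →L[ℂ] H)) (T : Xi n → (H ≃ₗᵢ[ℂ] H))
    (hTc : ∀ v : H, Continuous fun X => T X v)
    (hTmul : ∀ (X Y : Xi n) (v : H), T X (T Y v) = kap Y X • T (X + Y) v)
    (hcov : ∀ (Y : Xi n) (g : A) (v : H), T Y (r g ((T Y).symm v)) = r (Θ Y g) v)
    (h : SchwartzMap (Xi n) ℂ) (f : A) (hf : ContDiff ℝ (⊤ : ℕ∞) fun X => Θ X f)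
    (Z : Xi n) :
    ((T Z).toContinuousLinearEquiv : H →L[ℂ] H).comp
        ((repOpM Θ r T (fun Y => h Y) f).comp
          (((T Z).symm.toContinuousLinearEquiv : H →L[ℂ] H)))
      = repOpM Θ r T (fun Y => h (Y - Z)) f := by
  rw [repOpM, conj_integral, repOpM]
  refine integral_congr_ae (Filter.Eventually.of_forall fun X => ?_)
  ext v
  -- The phases `exp(iω(X,Z))` from `Θ_Z` and `exp(-iω(X,Z))` from the Weyl relation cancel.
  have key := weyl_comm T hTmul X Z ((T Z).symm v)
  rw [LinearIsometryEquiv.apply_symm_apply] at key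
  have hc := hcov Z (Θ ((2:ℝ)⁻¹ • X)
    (∫ Y, Complex.exp (-Complex.I * (symp X Y : ℂ)) • (h Y • Θ Y f) ∂(nmeas n)))
    (T Z (T X ((T Z).symm v)))
  rw [LinearIsometryEquiv.symm_apply_apply, ← hΘadd, add_comm Z, hΘadd,
    theta_modulation Θ hΘadd (fun Y => h Y) f X Z, key] at hc
  refine hc.trans ?_
  simp only [map_smul, smul_apply, smul_smul, ← Complex.exp_add]
  rw [show -Complex.I * (symp X Z : ℂ) + Complex.I * (symp X Z : ℂ) = 0 by ring]
  simp
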